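/- Let n_1 ≥ 1, n_2 ≥ 1, n_3 ≥ 1 be integers and set N := n_1 + n_2. Then in ℚ(q) one has P(n_3, N) · [N−1 choose n_1] + q^{n_2} · P(n_3−1, N) · [N−1 choose n_1−1] = P(2n_2+n_3−1, n_1) · P(n_3, n_2). -/

import Mathlib

open scoped BigOperators

noncomputable section

/-- The field ℚ(q). -/
abbrev K : Type := RatFunc ℚ

/-- The variable q. -/
def qq : K := RatFunc.X

/-- The quantum integer [n] = 1 + q + ⋯ + q^{n-1}. -/
def qint (n : ℕ) : K := ∑ i ∈ Finset.range n, qq ^ i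

/-- The quantum factorial [n]! = [1][2]⋯[n]. -/
def qfact (n : ℕ) : K := ∏ i ∈ Finset.range n, qint (i + 1)

/-- The Gaussian binomial coefficient [n choose k] = [n]!/([k]!·[n-k]!),
with the convention that it is 0 when k > n. -/
def qbinom (n k : ℕ) : K :=
  if k ≤ n then qfact n / (qfact k * qfact (n - k)) else 0

/-- a_{(2m-1,N)} = [N+2m]/[2m] and a_{(2m,N)} = [2N+2m]/[N+2m]:
for odd j = 2m-1 this is [N+j+1]/[j+1], for even j = 2m this is [2N+j]/[N+j]. -/
def aB (j N : ℕ) : K :=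
  if Odd j then qint (N + j + 1) / qint (j + 1) else qint (2 * N + j) / qint (N + j)

/-- P(M,N) = ∏_{i=1}^{N}(1+q^i) · ∏_{j=1}^{M} a_{(j,N)}. -/
def P (M N : ℕ) : K :=
  (∏ i ∈ Finset.range N, (1 + qq ^ (i + 1))) * ∏ j ∈ Finset.range M, aB (j + 1) N

/-!
Absorption turns both binomials, after multiplication by `[N]`, into multiples of `[N choose n₁]`.
The product `P` telescopes: `[N]! · P(M, N)` is a quotient of products `[2][4]⋯[2n]`, up to one
extra quantum integer when `M` is odd. Once the common factors are cancelled, both parities of `n₃`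
become the single identity `[a+b+c][b] + q^b [c][a] = [a+b][b+c]`, with `a = n₁`, `b = n₂` and
`c = n₃ + 1` for odd `n₃`, `c = N + n₃` for even `n₃`.
-/

theorem qint_add (m n : ℕ) : qint (m + n) = qint m + qq ^ m * qint n := by
  simp only [qint, Finset.sum_range_add, pow_add, Finset.mul_sum]

theorem qint_two_mul (n : ℕ) : qint (2 * n) = qint n * (1 + qq ^ n) := by
  rw [two_mul, qint_add]
  ring

theorem qint_mul_qint_add_pow_mul (a b c : ℕ) :
    qint (a + b + c) * qint b + qq ^ b * qint c * qint a = qint (a + b) * qint (b + c) := by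
  rw [show a + b + c = b + c + a by ring, add_comm a b, qint_add (b + c), qint_add b a,
    add_comm b c, qint_add c b]
  ring

theorem qint_ne_zero {n : ℕ} (hn : n ≠ 0) : qint n ≠ 0 := by
  have qint_eq_algebraMap : qint n = algebraMap (Polynomial ℚ) K
      (∑ i ∈ Finset.range n, Polynomial.X ^ i) := by
    simp [qint, qq]
  rw [qint_eq_algebraMap, Ne, map_eq_zero_iff _ (RatFunc.algebraMap_injective ℚ)]
  exact (Polynomial.monic_geom_sum_X hn).ne_zero

theorem qfact_succ (n : ℕ) : qfact (n + 1) = qfact n * qint (n + 1) :=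
  Finset.prod_range_succ _ n

theorem qfact_ne_zero (n : ℕ) : qfact n ≠ 0 :=
  Finset.prod_ne_zero_iff.2 fun i _ => qint_ne_zero i.succ_ne_zero

theorem qbinom_add_left (a b : ℕ) : qbinom (a + b) a = qfact (a + b) / (qfact a * qfact b) := by
  rw [qbinom, if_pos (Nat.le_add_right a b), Nat.add_sub_cancel_left]

theorem qbinom_eq_zero_of_lt {n k : ℕ} (h : n < k) : qbinom n k = 0 :=
  if_neg h.not_ge

theorem qint_add_one_mul_qbinom (n k : ℕ) :
    qint (n + 1) * qbinom n k = qbinom (n + 1) (k + 1) * qint (k + 1) := by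
  rcases le_or_gt k n with hk | hk
  · obtain ⟨l, rfl⟩ := Nat.exists_eq_add_of_le hk
    rw [add_right_comm, qbinom_add_left, qbinom_add_left, add_right_comm, qfact_succ, qfact_succ]
    have := qint_ne_zero k.succ_ne_zero
    field_simp
  · simp only [qbinom_eq_zero_of_lt hk, qbinom_eq_zero_of_lt (Nat.succ_lt_succ hk),
      mul_zero, zero_mul]

theorem qbinom_mul_qint_add_one (n k : ℕ) :
    qbinom n k * qint (n + 1) = qbinom (n + 1) k * qint (n + 1 - k) := by
  rcases le_or_gt k n with hk | hk
  · obtain ⟨l, rfl⟩ := Nat.exists_eq_add_of_le hk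
    rw [add_assoc, Nat.add_sub_cancel_left, qbinom_add_left, qbinom_add_left, ← add_assoc,
      qfact_succ, qfact_succ]
    have := qint_ne_zero l.succ_ne_zero
    field_simp
  · rw [qbinom_eq_zero_of_lt hk, Nat.sub_eq_zero_of_le hk]
    simp [qint]

/-- The quantum double factorial `[2n]!! = [2][4]⋯[2n]`, indexed by `n` rather than `2n`. The
products `P M N` are expressed through it in closed form. -/
def qevenFact (n : ℕ) : K := ∏ i ∈ Finset.range n, qint (2 * (i + 1))

theorem qevenFact_succ (n : ℕ) : qevenFact (n + 1) = qevenFact n * qint (2 * (n + 1)) :=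
  Finset.prod_range_succ _ n

theorem qevenFact_ne_zero (n : ℕ) : qevenFact n ≠ 0 :=
  Finset.prod_ne_zero_iff.2 fun i _ => qint_ne_zero (by lia)

theorem qevenFact_eq_qfact_mul_prod (n : ℕ) :
    qevenFact n = qfact n * ∏ i ∈ Finset.range n, (1 + qq ^ (i + 1)) := by
  simp only [qevenFact, qfact, qint_two_mul, Finset.prod_mul_distrib]

theorem aB_two_mul_add_one (k N : ℕ) :
    aB (2 * k + 1) N = qint (N + 2 * (k + 1)) / qint (2 * (k + 1)) :=
  if_pos (odd_two_mul_add_one k)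

theorem aB_two_mul (k N : ℕ) : aB (2 * k) N = qint (2 * (N + k)) / qint (N + 2 * k) := by
  rw [aB, if_neg (Nat.not_odd_iff_even.2 (even_two_mul k)), mul_add]

theorem P_succ (M N : ℕ) : P (M + 1) N = P M N * aB (M + 1) N := by
  rw [P, Finset.prod_range_succ, ← mul_assoc, P]

theorem qfact_mul_P_zero (N : ℕ) : qfact N * P 0 N = qevenFact N := by
  rw [P, Finset.prod_range_zero, mul_one, qevenFact_eq_qfact_mul_prod]

theorem qfact_mul_P_two_mul (k N : ℕ) :
    qfact N * P (2 * k) N = qevenFact (N + k) / qevenFact k := by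
  induction k with
  | zero => simp [qfact_mul_P_zero, qevenFact]
  | succ k ih =>
    have P_add_two : P (2 * (k + 1)) N = P (2 * k) N * aB (2 * k + 1) N * aB (2 * (k + 1)) N := by
      rw [Nat.mul_succ, P_succ, P_succ]
    rw [P_add_two, aB_two_mul_add_one, aB_two_mul, ← mul_assoc, ← mul_assoc, ih, ← add_assoc,
      qevenFact_succ, qevenFact_succ]
    have : qint (N + 2 * (k + 1)) ≠ 0 := qint_ne_zero (by lia)
    field_simp

theorem qfact_mul_P_two_mul_add_one (k N : ℕ) :
    qfact N * P (2 * k + 1) N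
      = qevenFact (N + k) * qint (N + 2 * (k + 1)) / qevenFact (k + 1) := by
  rw [P_succ, aB_two_mul_add_one, ← mul_assoc, qfact_mul_P_two_mul, qevenFact_succ,
    div_mul_div_comm]

theorem qfact_mul_P_add_P_even (a b k : ℕ) :
    qfact (a + b) * P (2 * k + 1) (a + b) * qint b
        + qq ^ b * (qfact (a + b) * P (2 * k) (a + b)) * qint a
      = qint (a + b) * (qfact a * P (2 * (b + k)) a) * (qfact b * P (2 * k + 1) b) := by
  simp only [qfact_mul_P_two_mul, qfact_mul_P_two_mul_add_one, qevenFact_succ, ← add_assoc]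
  have := qevenFact_ne_zero k
  have := qevenFact_ne_zero (b + k)
  have : qint (2 * (k + 1)) ≠ 0 := qint_ne_zero (by lia)
  field_simp
  linear_combination qevenFact (a + b + k) * qint_mul_qint_add_pow_mul a b (2 * (k + 1))

theorem qfact_mul_P_add_P_odd (a b k : ℕ) :
    qfact (a + b) * P (2 * (k + 1)) (a + b) * qint b
        + qq ^ b * (qfact (a + b) * P (2 * k + 1) (a + b)) * qint a
      = qint (a + b) * (qfact a * P (2 * (b + k) + 1) a) * (qfact b * P (2 * (k + 1)) b) := by
  simp only [qfact_mul_P_two_mul, qfact_mul_P_two_mul_add_one, ← add_assoc]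
  rw [qevenFact_succ (a + b + k)]
  have := qevenFact_ne_zero (k + 1)
  have := qevenFact_ne_zero (b + k + 1)
  have key := qint_mul_qint_add_pow_mul a b (a + b + 2 * (k + 1))
  rw [show a + b + (a + b + 2 * (k + 1)) = 2 * (a + b + k + 1) by ring,
    show b + (a + b + 2 * (k + 1)) = a + 2 * (b + k + 1) by ring] at key
  field_simp
  linear_combination qevenFact (a + b + k) * key

theorem qbinom_mul_P_add_P (a b m : ℕ) :
    qbinom (a + b) a * (P (m + 1) (a + b) * qint b + qq ^ b * P m (a + b) * qint a)
      = qint (a + b) * (P (2 * b + m) a * P (m + 1) b) := by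
  have cleared : qfact (a + b) * P (m + 1) (a + b) * qint b
        + qq ^ b * (qfact (a + b) * P m (a + b)) * qint a
      = qint (a + b) * (qfact a * P (2 * b + m) a) * (qfact b * P (m + 1) b) := by
    rcases Nat.even_or_odd' m with ⟨k, rfl | rfl⟩
    · rw [← mul_add]
      exact qfact_mul_P_add_P_even a b k
    · rw [← add_assoc, ← mul_add]
      exact qfact_mul_P_add_P_odd a b k
  rw [qbinom_add_left]
  have := qfact_ne_zero a
  have := qfact_ne_zero b
  field_simp
  linear_combination cleared

theorem stmt_4 (n1 n2 n3 : ℕ) (h1 : 1 ≤ n1) (h2 : 1 ≤ n2) (h3 : 1 ≤ n3) :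
    P n3 (n1 + n2) * qbinom (n1 + n2 - 1) n1
        + qq ^ n2 * P (n3 - 1) (n1 + n2) * qbinom (n1 + n2 - 1) (n1 - 1)
      = P (2 * n2 + n3 - 1) n1 * P n3 n2 := by
  obtain ⟨a, rfl⟩ := Nat.exists_eq_add_of_le' h1
  obtain ⟨b, rfl⟩ := Nat.exists_eq_add_of_le' h2
  obtain ⟨m, rfl⟩ := Nat.exists_eq_add_of_le' h3
  simp only [Nat.add_sub_cancel, ← Nat.add_assoc (a + 1), ← Nat.add_assoc (2 * (b + 1))]
  have absorb_upper : qbinom (a + 1 + b) (a + 1) * qint (a + 1 + b + 1)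
      = qbinom (a + 1 + b + 1) (a + 1) * qint (b + 1) := by
    rw [qbinom_mul_qint_add_one, add_assoc, Nat.add_sub_cancel_left]
  have absorb_lower : qint (a + 1 + b + 1) * qbinom (a + 1 + b) a
      = qbinom (a + 1 + b + 1) (a + 1) * qint (a + 1) :=
    qint_add_one_mul_qbinom (a + 1 + b) a
  have factored := qbinom_mul_P_add_P (a + 1) (b + 1) m
  rw [← add_assoc (a + 1)] at factored
  apply mul_left_cancel₀ (qint_ne_zero (a + 1 + b).succ_ne_zero)
  linear_combination P (m + 1) (a + 1 + b + 1) * absorb_upper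
    + qq ^ (b + 1) * P m (a + 1 + b + 1) * absorb_lower + factored
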